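/- Localization of minimizers under uniform quadratic approximation (unconstrained): let K be a symmetric positive definite real p×p matrix with smallest eigenvalue λ > 0, let f : ℝ^p → ℝ be convex, let β̄ ∈ ℝ^p, r > 0, and 0 ≤ ε < λr²/2. If |f(β) − f(β̄) − (1/2)(β − β̄)ᵀK(β − β̄)| ≤ ε for every β with ‖β − β̄‖ ≤ r, then every β ∈ ℝ^p with f(β) ≤ f(β̄) satisfies ‖β − β̄‖ < r; in particular every global minimizer of f lies in the open ball of radius r around β̄. -/

import Mathlib

open Matrix

/-- The Euclidean norm on `ℝ^p`. -/
noncomputable def euclNorm {p : ℕ} (v : Fin p → ℝ) : ℝ :=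
  Real.sqrt (∑ i, v i ^ 2)

/-! The sublevel set `{f ≤ f β̄}` is convex, hence connected, and contains `β̄`, so it could leave
the open ball only across the sphere. There the Rayleigh bound on the quadratic form gives
`f - f β̄ ≥ λ r² / 2 - ε > 0`. -/

theorem sublevel_subset_of_lt_on_frontier {E β : Type*} [AddCommGroup E] [Module ℝ E]
    [TopologicalSpace E] [ContinuousAdd E] [ContinuousSMul ℝ E] [Preorder β]
    {s U : Set E} {f : E → β} {x₀ : E} (hf : QuasiconvexOn ℝ s f) (hU : IsOpen U) (hx₀s : x₀ ∈ s)
    (hx₀U : x₀ ∈ U) (hlt : ∀ x ∈ s ∩ frontier U, f x₀ < f x) : {x ∈ s | f x ≤ f x₀} ⊆ U := by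
  refine (hf (f x₀)).isPreconnected.subset_of_closure_inter_subset hU
    ⟨x₀, ⟨hx₀s, le_rfl⟩, hx₀U⟩ ?_
  rintro x ⟨hx_closure, hxs, hle⟩
  by_contra hxU
  have hx_frontier : x ∈ frontier U := hU.frontier_eq ▸ ⟨hx_closure, hxU⟩
  exact (hlt x ⟨hxs, hx_frontier⟩).not_ge hle

section Rayleigh

open scoped MatrixOrder ComplexOrder

variable {n 𝕜 : Type*} [Fintype n] [DecidableEq n] [RCLike 𝕜] {A : Matrix n n 𝕜} {c : ℝ}

theorem algebraMap_le_of_le_eigenvalues (hA : A.IsHermitian) (hc : ∀ i, c ≤ hA.eigenvalues i) :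
    algebraMap ℝ (Matrix n n 𝕜) c ≤ A := by
  refine algebraMap_le_of_le_spectrum ?_ hA
  rw [hA.spectrum_real_eq_range_eigenvalues]
  exact Set.forall_mem_range.2 hc

theorem smul_star_dotProduct_self_le_of_le_eigenvalues (hA : A.IsHermitian)
    (hc : ∀ i, c ≤ hA.eigenvalues i) (v : n → 𝕜) :
    c • (star v ⬝ᵥ v) ≤ star v ⬝ᵥ A *ᵥ v := by
  have hnonneg : 0 ≤ star v ⬝ᵥ (A - algebraMap ℝ (Matrix n n 𝕜) c) *ᵥ v :=
    (Matrix.le_iff.1 (algebraMap_le_of_le_eigenvalues hA hc)).dotProduct_mulVec_nonneg v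
  rwa [sub_mulVec, Algebra.algebraMap_eq_smul_one, smul_mulVec, one_mulVec, dotProduct_sub,
    dotProduct_smul, sub_nonneg] at hnonneg

end Rayleigh

section EuclNorm

variable {p : ℕ}

theorem continuous_euclNorm : Continuous (euclNorm : (Fin p → ℝ) → ℝ) := by
  unfold euclNorm
  fun_prop

theorem euclNorm_zero : euclNorm (0 : Fin p → ℝ) = 0 := by
  simp [euclNorm]

theorem euclNorm_sq (v : Fin p → ℝ) : euclNorm v ^ 2 = v ⬝ᵥ v := by
  simp only [euclNorm, dotProduct, ← sq]
  exact Real.sq_sqrt (Finset.sum_nonneg fun i _ ↦ sq_nonneg (v i))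

theorem mul_euclNorm_sq_le_of_le_eigenvalues {K : Matrix (Fin p) (Fin p) ℝ} {c : ℝ}
    (hK : K.IsHermitian) (hc : ∀ i, c ≤ hK.eigenvalues i) (v : Fin p → ℝ) :
    c * euclNorm v ^ 2 ≤ v ⬝ᵥ K *ᵥ v := by
  simpa only [star_trivial, smul_eq_mul, euclNorm_sq] using
    smul_star_dotProduct_self_le_of_le_eigenvalues hK hc v

/-- The open Euclidean ball, as a subset of `Fin p → ℝ`, where `Metric.ball` is taken in the
sup norm. -/
def euclBall (x₀ : Fin p → ℝ) (r : ℝ) : Set (Fin p → ℝ) :=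
  {x | euclNorm (x - x₀) < r}

theorem mem_euclBall_self (x₀ : Fin p → ℝ) {r : ℝ} (hr : 0 < r) : x₀ ∈ euclBall x₀ r := by
  change euclNorm (x₀ - x₀) < r
  rwa [sub_self, euclNorm_zero]

theorem isOpen_euclBall (x₀ : Fin p → ℝ) (r : ℝ) : IsOpen (euclBall x₀ r) :=
  isOpen_lt (continuous_euclNorm.comp (continuous_sub_right x₀)) continuous_const

theorem frontier_euclBall_subset (x₀ : Fin p → ℝ) (r : ℝ) :
    frontier (euclBall x₀ r) ⊆ {x | euclNorm (x - x₀) = r} :=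
  frontier_lt_subset_eq (continuous_euclNorm.comp (continuous_sub_right x₀)) continuous_const

end EuclNorm

theorem localization_unconstrained_general {p : ℕ} {K : Matrix (Fin p) (Fin p) ℝ}
    (hK : K.IsHermitian) {lam : ℝ} (hlam : ∀ i, lam ≤ hK.eigenvalues i)
    {s : Set (Fin p → ℝ)} {f : (Fin p → ℝ) → ℝ} (hf : QuasiconvexOn ℝ s f)
    {βbar : Fin p → ℝ} (hβbar : βbar ∈ s) {r ε : ℝ} (hr : 0 < r) (hε : ε < lam * r ^ 2 / 2)
    (hlower : ∀ β ∈ s, euclNorm (β - βbar) = r →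
      (1 / 2) * ((β - βbar) ⬝ᵥ K *ᵥ (β - βbar)) - ε ≤ f β - f βbar) :
    ∀ β ∈ s, f β ≤ f βbar → euclNorm (β - βbar) < r := by
  have hlt_frontier : ∀ β ∈ s ∩ frontier (euclBall βbar r), f βbar < f β := by
    rintro β ⟨hβs, hβ⟩
    have hnorm : euclNorm (β - βbar) = r := frontier_euclBall_subset βbar r hβ
    have hrayleigh : lam * r ^ 2 ≤ (β - βbar) ⬝ᵥ K *ᵥ (β - βbar) :=
      hnorm ▸ mul_euclNorm_sq_le_of_le_eigenvalues hK hlam (β - βbar)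
    linarith [hlower β hβs hnorm]
  exact fun β hβs hle ↦ sublevel_subset_of_lt_on_frontier hf (isOpen_euclBall βbar r) hβbar
    (mem_euclBall_self βbar hr) hlt_frontier ⟨hβs, hle⟩

/-- Localization of minimizers under uniform quadratic approximation
(unconstrained): if a convex `f` is within `ε` of the quadratic
`β ↦ (1/2)(β-β̄)ᵀK(β-β̄)` (up to the constant `f(β̄)`) on the ball of radius `r`
around `β̄`, with `ε < λ r² / 2` and `λ` the smallest eigenvalue of `K`, then
any point at which `f` does not exceed `f(β̄)` lies in the open ball, and in
particular so does every global minimizer of `f`. -/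
theorem localization_unconstrained {p : ℕ}
    (K : Matrix (Fin p) (Fin p) ℝ) (hsymm : K.IsSymm) (hpd : K.PosDef)
    (lam : ℝ) (hlam : IsLeast (Set.range hpd.1.eigenvalues) lam) (hlam_pos : 0 < lam)
    (f : (Fin p → ℝ) → ℝ) (hf : ConvexOn ℝ Set.univ f)
    (βbar : Fin p → ℝ) (r : ℝ) (hr : 0 < r) (ε : ℝ) (hε0 : 0 ≤ ε)
    (hε : ε < lam * r ^ 2 / 2)
    (happrox : ∀ β : Fin p → ℝ, euclNorm (β - βbar) ≤ r →
      |f β - f βbar - (1/2) * ((β - βbar) ⬝ᵥ K.mulVec (β - βbar))| ≤ ε) :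
    (∀ β : Fin p → ℝ, f β ≤ f βbar → euclNorm (β - βbar) < r) ∧
    (∀ β : Fin p → ℝ, (∀ β' : Fin p → ℝ, f β ≤ f β') → euclNorm (β - βbar) < r) := by
  have hsublevel := localization_unconstrained_general hpd.1 (fun i ↦ hlam.2 ⟨i, rfl⟩)
    hf.quasiconvexOn (Set.mem_univ βbar) hr hε fun β _ hβ ↦ by
      linarith [(abs_le.1 (happrox β hβ.le)).1]
  exact ⟨fun β ↦ hsublevel β trivial, fun β hβ ↦ hsublevel β trivial (hβ βbar)⟩
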